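/- arXiv:1011.3146 — 6 statements merged into one kernel-verified Lean document; each statement's English description precedes it below -/
import Mathlib

section
/- Let X be a proper metric space and let Γ be a group acting geometrically on X. Let ζ_1, …, ζ_k ∈ Γ be free generators of a free abelian subgroup Λ of Γ, and let C = ⋂_{i≤k} C_Γ(ζ_i) be the common centralizer of the ζ_i. Then for every R > 0 the group C acts cocompactly on the set M_R = {x ∈ X | Σ_{i≤k} d(ζ_i•x, x) ≤ R}: there exists a compact set K ⊆ X such that every x ∈ M_R can be written as x = γ•y with γ ∈ C and y ∈ K ∩ M_R. (Paper: Lemma 1.) -/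
/-- **Lemma 1.** Let `X` be a proper metric space with a geometric action of `Γ`
(by isometries, properly discontinuously, cocompactly). Let `ζ 1, …, ζ k` be free
generators of a free abelian subgroup of `Γ` and `C` their common centralizer.
For every `R > 0`, `C` acts cocompactly on `M_R = {x | ∑ i, dist (ζ i • x) x ≤ R}`. -/
theorem lemma1_centralizer_acts_cocompactly_on_MR
    {X : Type*} [MetricSpace X] [ProperSpace X]
    {Γ : Type*} [Group Γ] [MulAction Γ X]
    -- Γ acts by isometries
    (isom : ∀ (γ : Γ) (x y : X), dist (γ • x) (γ • y) = dist x y)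
    -- Γ acts properly discontinuously
    (propdisc : ∀ K : Set X, IsCompact K →
      {γ : Γ | ((fun x => γ • x) '' K ∩ K).Nonempty}.Finite)
    -- Γ acts cocompactly
    (cocpt : ∃ K : Set X, IsCompact K ∧ ∀ x : X, ∃ γ : Γ, γ • x ∈ K)
    -- ζ 1, …, ζ k are free generators of a free abelian subgroup of Γ
    {k : ℕ} (ζ : Fin k → Γ)
    (φ : Multiplicative (Fin k → ℤ) →* Γ)
    (hφinj : Function.Injective φ)
    (hφζ : ∀ i : Fin k, φ (Multiplicative.ofAdd (Pi.single i 1)) = ζ i)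
    (R : ℝ) (hR : 0 < R) :
    ∃ K : Set X, IsCompact K ∧
      ∀ x ∈ {x : X | ∑ i : Fin k, dist (ζ i • x) x ≤ R},
        ∃ γ : Γ, (∀ i : Fin k, Commute γ (ζ i)) ∧
          ∃ y ∈ K ∩ {x : X | ∑ i : Fin k, dist (ζ i • x) x ≤ R}, x = γ • y := by
  classical
  obtain ⟨K0, hK0, hcov⟩ := cocpt
  have hL : IsCompact (Metric.cthickening R K0) := hK0.cthickening
  have hF := propdisc _ hL
  have hT := Set.Finite.pi' (fun _ : Fin k => hF)
  have hch : ∀ t : Fin k → Γ, ∃ h : Γ,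
      (∃ g : Γ, ∀ i, g * ζ i * g⁻¹ = t i) → ∀ i, h * ζ i * h⁻¹ = t i := by
    intro t
    by_cases ht : ∃ g : Γ, ∀ i, g * ζ i * g⁻¹ = t i
    · obtain ⟨g, hg⟩ := ht
      exact ⟨g, fun _ => hg⟩
    · exact ⟨1, fun h => absurd h ht⟩
  choose h hh using hch
  have hcont : ∀ γ : Γ, Continuous (fun x : X => γ • x) := fun γ =>
    (Isometry.of_dist_eq (isom γ)).continuous
  refine ⟨_, hT.isCompact_biUnion (f := fun t => (fun x : X => (h t)⁻¹ • x) '' K0)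
    (fun t _ => hK0.image (hcont _)), ?_⟩
  intro x hx
  simp only [Set.mem_setOf_eq] at hx
  obtain ⟨g, hg⟩ := hcov x
  have ht := hh (fun i => g * ζ i * g⁻¹) ⟨g, fun _ => rfl⟩
  have hmem : ∀ i, g * ζ i * g⁻¹ ∈ {γ : Γ | ((fun x => γ • x) '' Metric.cthickening R K0 ∩
      Metric.cthickening R K0).Nonempty} := by
    intro i
    refine ⟨(g * ζ i * g⁻¹) • (g • x), ⟨g • x, Metric.self_subset_cthickening _ hg, rfl⟩, ?_⟩
    refine Metric.mem_cthickening_of_dist_le _ (g • x) R K0 hg ?_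
    have e : (g * ζ i * g⁻¹) • (g • x) = g • (ζ i • x) := by
      simp [smul_smul]
    rw [e, isom]
    exact (Finset.single_le_sum (f := fun i => dist (ζ i • x) x)
      (fun _ _ => dist_nonneg) (Finset.mem_univ i)).trans hx
  generalize htt : (fun i => g * ζ i * g⁻¹) = t at ht
  have htm : ∀ i, t i = g * ζ i * g⁻¹ := fun i => by rw [← htt]
  have key : ∀ i, (h t)⁻¹ * g * ζ i = ζ i * ((h t)⁻¹ * g) := by
    intro i
    have h1 : h t * ζ i * (h t)⁻¹ = g * ζ i * g⁻¹ := by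
      have := ht i
      rw [← htm]
      simpa [htm] using this
    have h2 : g * ζ i = h t * ζ i * (h t)⁻¹ * g := by rw [h1]; group
    rw [mul_assoc, h2]; group
  have hc : ∀ i, Commute ((h t)⁻¹ * g) (ζ i) := key
  refine ⟨((h t)⁻¹ * g)⁻¹, fun i => (hc i).inv_left, ((h t)⁻¹ * g) • x, ⟨?_, ?_⟩, ?_⟩
  · refine Set.mem_biUnion (x := t) ?_ ⟨g • x, hg, by simp [smul_smul]⟩
    intro i
    rw [htm]
    exact hmem i
  · simp only [Set.mem_setOf_eq]
    refine le_trans (le_of_eq ?_) hx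
    refine Finset.sum_congr rfl fun i _ => ?_
    rw [smul_smul, ← key i, ← smul_smul, isom]
  · rw [inv_smul_smul]
end

section
/- Let X be a proper metric space and let Γ be a group acting geometrically on X. Let ζ_1, …, ζ_k ∈ Γ be free generators of a free abelian subgroup Λ of Γ, and let C = ⋂_{i≤k} C_Γ(ζ_i). Assume that Min_X(Λ) = ⋂_{i≤k} Min_X(ζ_i) is nonempty. Then C acts cocompactly on Min_X(Λ): there exists a compact set K ⊆ X such that every x ∈ Min_X(Λ) can be written as x = γ•y with γ ∈ C and y ∈ K ∩ Min_X(Λ). (Paper: Corollary 2, cocompactness part.) -/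
/-- **Corollary 2 (cocompactness part).** Let `X` be a proper metric space with a
geometric action of `Γ`. Let `ζ 1, …, ζ k` be free generators of a free abelian
subgroup of `Γ` and `C` their common centralizer. If `Min_X(Λ) = ⋂ i, Min_X(ζ i)`
is nonempty, then `C` acts cocompactly on it. -/
theorem corollary2_centralizer_acts_cocompactly_on_Min
    {X : Type*} [MetricSpace X] [ProperSpace X]
    {Γ : Type*} [Group Γ] [MulAction Γ X]
    -- Γ acts by isometries
    (isom : ∀ (γ : Γ) (x y : X), dist (γ • x) (γ • y) = dist x y)
    -- Γ acts properly discontinuously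
    (propdisc : ∀ K : Set X, IsCompact K →
      {γ : Γ | ((fun x => γ • x) '' K ∩ K).Nonempty}.Finite)
    -- Γ acts cocompactly
    (cocpt : ∃ K : Set X, IsCompact K ∧ ∀ x : X, ∃ γ : Γ, γ • x ∈ K)
    -- ζ 1, …, ζ k are free generators of a free abelian subgroup of Γ
    {k : ℕ} (ζ : Fin k → Γ)
    (φ : Multiplicative (Fin k → ℤ) →* Γ)
    (hφinj : Function.Injective φ)
    (hφζ : ∀ i : Fin k, φ (Multiplicative.ofAdd (Pi.single i 1)) = ζ i)
    -- the minimal displacement set of Λ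
    (MinΛ : Set X)
    (hMin : MinΛ = ⋂ i : Fin k,
      {x : X | dist (ζ i • x) x = ⨅ y : X, dist (ζ i • y) y})
    (hne : MinΛ.Nonempty) :
    ∃ K : Set X, IsCompact K ∧
      ∀ x ∈ MinΛ,
        ∃ γ : Γ, (∀ i : Fin k, Commute γ (ζ i)) ∧
          ∃ y ∈ K ∩ MinΛ, x = γ • y := by
  obtain ⟨K₀, hK₀, hcov⟩ := cocpt
  choose g hg using hcov
  have hmem : ∀ x, x ∈ MinΛ ↔ ∀ i, dist (ζ i • x) x = ⨅ y : X, dist (ζ i • y) y := by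
    intro x
    rw [hMin]
    simp
  have hcont : ∀ γ : Γ, Continuous (fun x : X => γ • x) := fun γ =>
    (Isometry.of_dist_eq (isom γ)).continuous
  -- the conjugated tuples
  let τ : X → Fin k → Γ := fun x i => g x * ζ i * (g x)⁻¹
  have hfin : (τ '' MinΛ).Finite := by
    refine Set.Finite.subset (Set.Finite.pi' (fun i => propdisc
      (Metric.cthickening (⨅ y : X, dist (ζ i • y) y) K₀) hK₀.cthickening)) ?_
    rintro _ ⟨x, hx, rfl⟩ i
    have hL : 0 ≤ ⨅ y : X, dist (ζ i • y) y := Real.iInf_nonneg fun _ => dist_nonneg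
    refine ⟨τ x i • (g x • x), ⟨g x • x, ?_, rfl⟩, ?_⟩
    · exact Metric.self_subset_cthickening _ (hg x)
    · refine Metric.mem_cthickening_of_dist_le _ (g x • x) _ _ (hg x) ?_
      have h : τ x i • (g x • x) = g x • (ζ i • x) := by
        simp [τ, mul_smul]
      rw [h, isom]
      exact ((hmem x).1 hx i).le
  obtain ⟨S, hS, hbij⟩ := Set.exists_subset_bijOn MinΛ τ
  have hSfin : S.Finite := hbij.finite_iff_finite.2 hfin
  refine ⟨⋃ s ∈ S, (fun x => (g s)⁻¹ • x) '' K₀,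
    hSfin.isCompact_biUnion fun s _ => hK₀.image (hcont _), ?_⟩
  intro x hx
  obtain ⟨s, hs, hsx⟩ := hbij.surjOn ⟨x, hx, rfl⟩
  have hcomm : ∀ i, Commute ((g x)⁻¹ * g s) (ζ i) := by
    intro i
    have h : g s * ζ i * (g s)⁻¹ = g x * ζ i * (g x)⁻¹ := congrFun hsx i
    have h' : g s * ζ i = g x * ζ i * (g x)⁻¹ * g s := by
      rw [← h]; group
    change (g x)⁻¹ * g s * ζ i = ζ i * ((g x)⁻¹ * g s)
    rw [mul_assoc, h']; group
  refine ⟨(g x)⁻¹ * g s, hcomm, (g s)⁻¹ • (g x • x), ⟨?_, ?_⟩, ?_⟩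
  · exact Set.mem_biUnion hs ⟨g x • x, hg x, rfl⟩
  · rw [hmem]
    intro i
    rw [← (hmem x).1 hx i]
    have e : (g s)⁻¹ • (g x • x) = ((g x)⁻¹ * g s)⁻¹ • x := by
      simp [mul_smul]
    rw [e, ← mul_smul, ← ((hcomm i).inv_left).eq, mul_smul, isom]
  · simp [mul_smul]
end

section
/- Let X be a proper metric space and let Γ be a group acting geometrically on X. Let ζ_1, …, ζ_k ∈ Γ be free generators of a free abelian subgroup Λ of Γ, and let C = ⋂_{i≤k} C_Γ(ζ_i). Assume that S = Min_X(Λ) = ⋂_{i≤k} Min_X(ζ_i) is nonempty and geodesic: for all x, y ∈ S there is an isometric embedding c : [0, d(x,y)] → X with c(0) = x, c(d(x,y)) = y and image contained in S. Then C is finitely generated. (Paper: Corollary 2, finite generation part.) -/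
/-- **Corollary 2 (finite generation part).** Let `X` be a proper metric space with
a geometric action of `Γ`. Let `ζ 1, …, ζ k` be free generators of a free abelian
subgroup of `Γ`. If `S = Min_X(Λ) = ⋂ i, Min_X(ζ i)` is nonempty and geodesic,
then the common centralizer `C = ⋂ i, C_Γ(ζ i)` is finitely generated. -/
theorem corollary2_centralizer_finitely_generated
    {X : Type*} [MetricSpace X] [ProperSpace X]
    {Γ : Type*} [Group Γ] [MulAction Γ X]
    -- Γ acts by isometries
    (isom : ∀ (γ : Γ) (x y : X), dist (γ • x) (γ • y) = dist x y)
    -- Γ acts properly discontinuously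
    (propdisc : ∀ K : Set X, IsCompact K →
      {γ : Γ | ((fun x => γ • x) '' K ∩ K).Nonempty}.Finite)
    -- Γ acts cocompactly
    (cocpt : ∃ K : Set X, IsCompact K ∧ ∀ x : X, ∃ γ : Γ, γ • x ∈ K)
    -- ζ 1, …, ζ k are free generators of a free abelian subgroup of Γ
    {k : ℕ} (ζ : Fin k → Γ)
    (φ : Multiplicative (Fin k → ℤ) →* Γ)
    (hφinj : Function.Injective φ)
    (hφζ : ∀ i : Fin k, φ (Multiplicative.ofAdd (Pi.single i 1)) = ζ i)
    -- S = Min_X(Λ)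
    (S : Set X)
    (hS : S = ⋂ i : Fin k,
      {x : X | dist (ζ i • x) x = ⨅ y : X, dist (ζ i • y) y})
    (hne : S.Nonempty)
    -- S is geodesic
    (hgeo : ∀ x ∈ S, ∀ y ∈ S, ∃ c : ℝ → X,
      c 0 = x ∧ c (dist x y) = y ∧
      (∀ t ∈ Set.Icc (0 : ℝ) (dist x y), c t ∈ S) ∧
      (∀ s ∈ Set.Icc (0 : ℝ) (dist x y), ∀ t ∈ Set.Icc (0 : ℝ) (dist x y),
        dist (c s) (c t) = |s - t|)) :
    Subgroup.FG (⨅ i : Fin k, Subgroup.centralizer {ζ i}) := by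
  classical
  obtain ⟨K, hK, hcov⟩ := cocpt
  obtain ⟨x0, hx0⟩ := hne
  set C : Subgroup Γ := ⨅ i : Fin k, Subgroup.centralizer {ζ i} with hC
  have memC : ∀ g : Γ, g ∈ C ↔ ∀ i, ζ i * g = g * ζ i := by
    intro g
    simp only [hC, Subgroup.mem_iInf, Subgroup.mem_centralizer_iff, Set.mem_singleton_iff,
      forall_eq]
  have memS : ∀ x : X, x ∈ S ↔ ∀ i, dist (ζ i • x) x = ⨅ y : X, dist (ζ i • y) y := by
    intro x
    rw [hS]
    simp only [Set.mem_iInter, Set.mem_ofPred_eq]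
  have CS : ∀ g ∈ C, ∀ x ∈ S, g • x ∈ S := by
    intro g hg x hx
    rw [memS] at hx ⊢
    rw [memC] at hg
    intro i
    rw [← hx i, ← mul_smul, hg i, mul_smul, isom]
  have finBall : ∀ r : ℝ, {γ : Γ | ∃ y, dist y x0 ≤ r ∧ dist (γ • y) x0 ≤ r}.Finite := by
    intro r
    refine (propdisc (Metric.closedBall x0 r) (isCompact_closedBall x0 r)).subset ?_
    rintro γ ⟨y, h1, h2⟩
    exact ⟨γ • y, ⟨y, h1, rfl⟩, h2⟩
  obtain ⟨r, hr⟩ : ∃ r : ℝ, ∀ y ∈ K, dist y x0 ≤ r := by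
    obtain ⟨r, hr⟩ := hK.isBounded.subset_closedBall x0
    exact ⟨r, fun y hy => hr hy⟩
  choose γ hγ using hcov
  -- the tuple of conjugates takes finitely many values on S
  let T : X → (Fin k → Γ) := fun s i => γ s * ζ i * (γ s)⁻¹
  have finT : (T '' S).Finite := by
    refine (Set.Finite.pi (t := fun i : Fin k => {g : Γ | ∃ y, dist y x0 ≤
      r + (⨅ y : X, dist (ζ i • y) y) ∧ dist (g • y) x0 ≤ r + (⨅ y : X, dist (ζ i • y) y)})
      (fun i => finBall _)).subset ?_
    rintro _ ⟨s, hs, rfl⟩ i -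
    have h1 := (memS s).1 hs i
    have h2 := hr _ (hγ s)
    have h3 : (T s i) • (γ s • s) = γ s • ζ i • s := by
      simp only [T, mul_smul, inv_smul_smul]
    refine ⟨γ s • s, ?_, ?_⟩
    · have := dist_nonneg (x := ζ i • s) (y := s)
      linarith
    · rw [h3]
      have h4 := dist_triangle (γ s • ζ i • s) (γ s • s) x0
      rw [isom, h1] at h4
      linarith
  obtain ⟨R, hR⟩ : ∃ R : ℝ, ∀ s ∈ S, ∃ c ∈ C, dist (c • x0) s ≤ R := by
    have hex : ∀ f : Fin k → Γ, ∃ s : X, f ∈ T '' S → T s = f := by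
      intro f
      by_cases hf : f ∈ T '' S
      · obtain ⟨s, -, h⟩ := hf
        exact ⟨s, fun _ => h⟩
      · exact ⟨x0, fun h => absurd h hf⟩
    choose rep hrepT using hex
    obtain ⟨M, hM⟩ := (finT.image (fun f => dist x0 (rep f))).bddAbove
    refine ⟨M + 2 * r, fun s hs => ?_⟩
    have hf : T s ∈ T '' S := ⟨s, hs, rfl⟩
    have hTT := hrepT _ hf
    have hm : dist x0 (rep (T s)) ≤ M := hM ⟨T s, hf, rfl⟩
    set u := rep (T s) with hu
    refine ⟨(γ s)⁻¹ * γ u, ?_, ?_⟩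
    · rw [memC]
      intro i
      have h := congrFun hTT i
      simp only [T] at h
      calc ζ i * ((γ s)⁻¹ * γ u) = (γ s)⁻¹ * (γ s * ζ i * (γ s)⁻¹) * γ u := by group
        _ = (γ s)⁻¹ * (γ u * ζ i * (γ u)⁻¹) * γ u := by rw [h]
        _ = (γ s)⁻¹ * γ u * ζ i := by group
    · have h1 := dist_triangle (((γ s)⁻¹ * γ u) • x0) (((γ s)⁻¹ * γ u) • u) s
      rw [isom] at h1
      have h2 : dist (((γ s)⁻¹ * γ u) • u) s = dist (γ u • u) (γ s • s) := by
        rw [← isom (γ s), mul_smul, smul_inv_smul]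
      have h3 := dist_triangle_right (γ u • u) (γ s • s) x0
      have h4 := hr _ (hγ s)
      have h5 := hr _ (hγ u)
      linarith
  have hR0 : 0 ≤ R := by
    obtain ⟨c, -, hc⟩ := hR x0 hx0
    exact dist_nonneg.trans hc
  let A : Set Γ := {g | g ∈ C ∧ dist (g • x0) x0 ≤ 2 * R + 1}
  have finA : A.Finite := by
    refine (finBall (2 * R + 1)).subset ?_
    rintro g ⟨-, h⟩
    exact ⟨x0, by rw [dist_self]; linarith, h⟩
  rw [Subgroup.fg_iff]
  refine ⟨A, le_antisymm ((Subgroup.closure_le _).2 fun g hg => hg.1) ?_, finA⟩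
  have step : ∀ h ∈ C, h ∈ Subgroup.closure A → ∀ h' ∈ C,
      dist (h • x0) (h' • x0) ≤ 2 * R + 1 → h' ∈ Subgroup.closure A := by
    intro h hhC hh h' hh' hd
    have : h⁻¹ * h' ∈ A := by
      refine ⟨C.mul_mem (C.inv_mem hhC) hh', ?_⟩
      rw [← isom h, mul_smul, smul_inv_smul, dist_comm]
      exact hd
    have h2 := mul_mem hh (Subgroup.subset_closure this)
    rwa [mul_inv_cancel_left] at h2
  intro g hg
  obtain ⟨c, c0, c1, cS, cd⟩ := hgeo x0 hx0 (g • x0) (CS g hg x0 hx0)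
  set D := dist x0 (g • x0) with hD
  have hD0 : 0 ≤ D := dist_nonneg
  have main : ∀ n : ℕ, ∃ h ∈ C, h ∈ Subgroup.closure A ∧ dist (h • x0) (c (min n D)) ≤ R := by
    intro n
    induction n with
    | zero =>
      refine ⟨1, C.one_mem, Subgroup.one_mem _, ?_⟩
      rw [Nat.cast_zero, min_eq_left hD0, c0, one_smul, dist_self]
      exact hR0
    | succ n ih =>
      obtain ⟨h, hhC, hh, hd⟩ := ih
      have m1 : min (n : ℝ) D ∈ Set.Icc 0 D := ⟨le_min (Nat.cast_nonneg _) hD0, min_le_right _ _⟩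
      have m2 : min ((n + 1 : ℕ) : ℝ) D ∈ Set.Icc 0 D :=
        ⟨le_min (Nat.cast_nonneg _) hD0, min_le_right _ _⟩
      obtain ⟨h', hh'C, hd'⟩ := hR _ (cS _ m2)
      refine ⟨h', hh'C, step h hhC hh h' hh'C ?_, hd'⟩
      have e := cd _ m1 _ m2
      have e2 : |min (n : ℝ) D - min ((n + 1 : ℕ) : ℝ) D| ≤ 1 := by
        have := abs_min_sub_min_le_max (n : ℝ) D ((n + 1 : ℕ) : ℝ) D
        refine this.trans ?_
        push_cast
        simp
      have t1 := dist_triangle4 (h • x0) (c (min (n : ℝ) D)) (c (min ((n + 1 : ℕ) : ℝ) D)) (h' • x0)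
      rw [dist_comm (c _) (h' • x0)] at t1
      linarith
  obtain ⟨n, hn⟩ := exists_nat_ge D
  obtain ⟨h, hhC, hh, hd⟩ := main n
  rw [min_eq_right hn, c1] at hd
  exact step h hhC hh g hg (by linarith)
end

section
/- Let X be a proper metric space and let Γ be a group acting geometrically on X. Let ζ_1, …, ζ_k ∈ Γ be free generators of a free abelian subgroup Λ of Γ. Assume Min_X(Λ) = ⋂_{i≤k} Min_X(ζ_i) is nonempty, and let R > 0 be such that M_R = {x ∈ X | Σ_{i≤k} d(ζ_i•x, x) ≤ R} is nonempty. Then the Hausdorff distance between M_R and Min_X(Λ) is finite: there is D ≥ 0 such that every point of M_R is within distance D of Min_X(Λ) and every point of Min_X(Λ) is within distance D of M_R. (Paper: Corollary 3.) -/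
/-- **Corollary 3.** Let `X` be a proper metric space with a geometric action of `Γ`
and `ζ 1, …, ζ k` free generators of a free abelian subgroup `Λ` of `Γ`. If
`Min_X(Λ)` is nonempty and `M_R` is nonempty for some `R > 0`, then the Hausdorff
distance between `M_R` and `Min_X(Λ)` is finite. -/
theorem corollary3_hausdorff_distance_finite
    {X : Type*} [MetricSpace X] [ProperSpace X]
    {Γ : Type*} [Group Γ] [MulAction Γ X]
    -- Γ acts by isometries
    (isom : ∀ (γ : Γ) (x y : X), dist (γ • x) (γ • y) = dist x y)
    -- Γ acts properly discontinuously
    (propdisc : ∀ K : Set X, IsCompact K →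
      {γ : Γ | ((fun x => γ • x) '' K ∩ K).Nonempty}.Finite)
    -- Γ acts cocompactly
    (cocpt : ∃ K : Set X, IsCompact K ∧ ∀ x : X, ∃ γ : Γ, γ • x ∈ K)
    -- ζ 1, …, ζ k are free generators of a free abelian subgroup of Γ
    {k : ℕ} (ζ : Fin k → Γ)
    (φ : Multiplicative (Fin k → ℤ) →* Γ)
    (hφinj : Function.Injective φ)
    (hφζ : ∀ i : Fin k, φ (Multiplicative.ofAdd (Pi.single i 1)) = ζ i)
    -- Min_X(Λ) is nonempty
    (MinΛ : Set X)
    (hMin : MinΛ = ⋂ i : Fin k,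
      {x : X | dist (ζ i • x) x = ⨅ y : X, dist (ζ i • y) y})
    (hMinne : MinΛ.Nonempty)
    -- M_R is nonempty for some R > 0
    (R : ℝ) (hR : 0 < R)
    (MR : Set X)
    (hMR : MR = {x : X | ∑ i : Fin k, dist (ζ i • x) x ≤ R})
    (hMRne : MR.Nonempty) :
    ∃ D : ℝ, 0 ≤ D ∧
      (∀ x ∈ MR, ∃ y ∈ MinΛ, dist x y ≤ D) ∧
      (∀ y ∈ MinΛ, ∃ x ∈ MR, dist x y ≤ D) := by
  classical
  obtain ⟨K, hK, hcov⟩ := cocpt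
  obtain ⟨m, hm⟩ := hMinne
  obtain ⟨r, hr⟩ := hK.isBounded.subset_closedBall m
  have hF := propdisc (Metric.closedBall m (r + R)) (isCompact_closedBall m (r + R))
  set F : Set Γ := {γ : Γ | ((fun x => γ • x) '' Metric.closedBall m (r + R) ∩
    Metric.closedBall m (r + R)).Nonempty} with hFdef
  have hT : (Set.pi Set.univ (fun _ : Fin k => F)).Finite := Set.Finite.pi' (fun _ => hF) |>.subset
    (fun t ht i => ht i (Set.mem_univ i))
  have hg : ∀ t : Fin k → Γ, ∃ g : Γ, (∃ γ : Γ, ∀ i, γ * ζ i * γ⁻¹ = t i) →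
      ∀ i, g * ζ i * g⁻¹ = t i := by
    intro t
    by_cases h : ∃ γ : Γ, ∀ i, γ * ζ i * γ⁻¹ = t i
    · obtain ⟨γ, hγ⟩ := h
      exact ⟨γ, fun _ => hγ⟩
    · exact ⟨1, fun h' => absurd h' h⟩
  choose g hg using hg
  obtain ⟨C, hC⟩ := (hT.image (fun t => dist m (g t • m))).bddAbove
  have hinf : ∀ (i : Fin k) (x : X), (⨅ y : X, dist (ζ i • y) y) ≤ dist (ζ i • x) x := by
    intro i x
    exact ciInf_le ⟨0, by rintro _ ⟨y, rfl⟩; exact dist_nonneg⟩ x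
  refine ⟨max 0 (r + C), le_max_left _ _, ?_, ?_⟩
  · intro x hx
    obtain ⟨γ, hγ⟩ := hcov x
    have hγm : dist (γ • x) m ≤ r := hr hγ
    let t : Fin k → Γ := fun i => γ * ζ i * γ⁻¹
    have htF : t ∈ Set.pi Set.univ (fun _ : Fin k => F) := by
      intro i _
      have h1 : dist (ζ i • x) x ≤ R := by
        rw [hMR] at hx
        exact (Finset.single_le_sum (f := fun i => dist (ζ i • x) x)
          (fun _ _ => dist_nonneg) (Finset.mem_univ i)).trans hx
      have h2 : t i • γ • x = γ • ζ i • x := by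
        simp [t, mul_smul]
      refine ⟨t i • γ • x, ⟨γ • x, ?_, rfl⟩, ?_⟩
      · rw [Metric.mem_closedBall]; linarith
      · rw [Metric.mem_closedBall, h2]
        have h3 := dist_triangle (γ • ζ i • x) (γ • x) m
        rw [isom] at h3
        linarith
    have hgt := hg t ⟨γ, fun _ => rfl⟩
    have hCt : dist m (g t • m) ≤ C := hC ⟨t, htF, rfl⟩
    refine ⟨γ⁻¹ • g t • m, ?_, ?_⟩
    · rw [hMin] at hm ⊢
      simp only [Set.mem_iInter, Set.mem_setOf_eq] at hm ⊢
      intro i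
      rw [← hm i]
      have h4 : ζ i * (γ⁻¹ * g t) = γ⁻¹ * g t * ζ i := by
        have h5 : g t * ζ i * (g t)⁻¹ = γ * ζ i * γ⁻¹ := hgt i
        have h6 : g t * ζ i = γ * ζ i * γ⁻¹ * g t := by rw [← h5]; group
        rw [mul_assoc γ⁻¹, h6]; group
      rw [← mul_smul γ⁻¹, ← mul_smul, h4, mul_smul, isom]
    · rw [← isom γ, smul_inv_smul]
      have := dist_triangle (γ • x) m (g t • m)
      exact le_max_of_le_right (by linarith)
  · intro y hy
    refine ⟨y, ?_, by simp⟩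
    obtain ⟨z, hz⟩ := hMRne
    rw [hMR] at hz ⊢
    rw [hMin] at hy
    simp only [Set.mem_iInter, Set.mem_setOf_eq] at hy hz ⊢
    refine (Finset.sum_le_sum fun i _ => ?_).trans hz
    rw [hy i]
    exact hinf i z
end

section
/- Let Y and Y' be metric spaces and equip X = Y × ℝ and X' = Y' × ℝ with the ℓ²-product metric d((y,s),(z,t)) = √(d(y,z)² + (s−t)²). Let L ≥ 1, A ≥ 0 and let Φ : X → X' be an (L,A)-quasi-isometry. Suppose there are real numbers a, b > 0 such that for all y ∈ Y, t ∈ ℝ and n ∈ ℤ the map Φ satisfies Φ(y, t + n·a) = ((Φ(y,t)).1, (Φ(y,t)).2 + n·b). Then the map Φ̌ : Y → Y', y ↦ (Φ(y,0)).1 is a quasi-isometry: there exists A' ≥ 0 such that Φ̌ is an (L, A')-quasi-isometric embedding whose image is A'-dense in Y'. (Paper: Lemma 11, first assertion, in the model case Min_X(Λ) ≅ X̌ × ℝ with Λ acting by vertical translations.) -/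
/-- **Lemma 11 (first assertion, model case).** Let `Φ : Y × ℝ → Y' × ℝ` be an
`(L,A)`-quasi-isometry with respect to the `ℓ²`-product metrics which is
equivariant for vertical translations by `a` resp. `b` (`a, b > 0`). Then
`Φ̌ : Y → Y'`, `y ↦ (Φ (y, 0)).1` is an `(L, A')`-quasi-isometry for some `A'`. -/
theorem projected_quasi_isometry
    {Y Y' : Type*} [MetricSpace Y] [MetricSpace Y']
    (L A : ℝ) (hL : 1 ≤ L) (hA : 0 ≤ A)
    (Φ : Y × ℝ → Y' × ℝ)
    -- Φ is an (L,A)-quasi-isometric embedding for the ℓ²-product metrics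
    (hqie : ∀ p q : Y × ℝ,
      (1 / L) * Real.sqrt (dist (Φ p).1 (Φ q).1 ^ 2 + ((Φ p).2 - (Φ q).2) ^ 2) - A ≤
          Real.sqrt (dist p.1 q.1 ^ 2 + (p.2 - q.2) ^ 2) ∧
        Real.sqrt (dist p.1 q.1 ^ 2 + (p.2 - q.2) ^ 2) ≤
          L * Real.sqrt (dist (Φ p).1 (Φ q).1 ^ 2 + ((Φ p).2 - (Φ q).2) ^ 2) + A)
    -- the image of Φ is A-dense
    (hdense : ∀ p' : Y' × ℝ, ∃ p : Y × ℝ,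
      Real.sqrt (dist (Φ p).1 p'.1 ^ 2 + ((Φ p).2 - p'.2) ^ 2) ≤ A)
    -- equivariance with respect to vertical translations
    (a b : ℝ) (ha : 0 < a) (hb : 0 < b)
    (hequiv : ∀ (y : Y) (t : ℝ) (n : ℤ),
      Φ (y, t + n * a) = ((Φ (y, t)).1, (Φ (y, t)).2 + n * b)) :
    ∃ A' : ℝ, 0 ≤ A' ∧
      (∀ y z : Y,
        (1 / L) * dist (Φ (y, 0)).1 (Φ (z, 0)).1 - A' ≤ dist y z ∧
          dist y z ≤ L * dist (Φ (y, 0)).1 (Φ (z, 0)).1 + A') ∧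
      (∀ y' : Y', ∃ y : Y, dist (Φ (y, 0)).1 y' ≤ A') := by
  have hL0 : 0 < L := by linarith
  have h1 : ∀ x y : ℝ, 0 ≤ x → x ≤ Real.sqrt (x ^ 2 + y ^ 2) := fun x y hx =>
    Real.le_sqrt_of_sq_le (by nlinarith [sq_nonneg y])
  have h2 : ∀ x y c : ℝ, 0 ≤ x → 0 ≤ c → |y| ≤ c → Real.sqrt (x ^ 2 + y ^ 2) ≤ x + c := by
    intro x y c hx hc hy
    apply Real.sqrt_le_iff.2
    refine ⟨by positivity, ?_⟩
    have := sq_le_sq' (abs_le.1 hy).1 (abs_le.1 hy).2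
    nlinarith [mul_nonneg hx hc]
  have hLa : 0 ≤ L * a := by positivity
  have hLb : 0 ≤ L * b := by positivity
  have hLA : 0 ≤ L * A := by positivity
  have hlow : ∀ p q : Y × ℝ, dist (Φ p).1 (Φ q).1 ≤
      L * (Real.sqrt (dist p.1 q.1 ^ 2 + (p.2 - q.2) ^ 2) + A) := by
    intro p q
    have h := (hqie p q).1
    have h' := h1 (dist (Φ p).1 (Φ q).1) ((Φ p).2 - (Φ q).2) dist_nonneg
    refine h'.trans ?_
    rw [sub_le_iff_le_add, one_div, inv_mul_le_iff₀ hL0] at h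
    exact h
  -- every real is within one period of a multiple of the period
  have hper : ∀ u c : ℝ, 0 < c → ∃ n : ℤ, |u - n * c| ≤ c := by
    intro u c hc
    refine ⟨⌊u / c⌋, ?_⟩
    have e1 : (⌊u / c⌋ : ℝ) * c ≤ u := (le_div_iff₀ hc).1 (Int.floor_le _)
    have e2 : u < ((⌊u / c⌋ : ℝ) + 1) * c := (div_lt_iff₀ hc).1 (Int.lt_floor_add_one _)
    rw [abs_le]
    constructor <;> nlinarith
  refine ⟨L * a + L * b + L * A + A, by positivity, ?_, ?_⟩
  · intro y z
    constructor
    · have h := hlow (y, 0) (z, 0)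
      simp only [sub_self, ne_eq, OfNat.ofNat_ne_zero, not_false_eq_true, zero_pow, add_zero,
        Real.sqrt_sq dist_nonneg] at h
      rw [← inv_mul_le_iff₀ hL0, ← one_div] at h
      linarith
    · obtain ⟨n, hn⟩ := hper ((Φ (y, 0)).2 - (Φ (z, 0)).2) b hb
      have h := (hqie (y, 0) (z, 0 + n * a)).2
      rw [hequiv] at h
      have h3 := h1 (dist y z) (0 - (0 + n * a)) dist_nonneg
      have h4 := h2 (dist (Φ (y, 0)).1 (Φ (z, 0)).1) ((Φ (y, 0)).2 - ((Φ (z, 0)).2 + n * b)) b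
        dist_nonneg hb.le (by rw [← sub_sub]; exact hn)
      have h5 := mul_le_mul_of_nonneg_left h4 hL0.le
      simp only at h
      linarith
  · intro y'
    obtain ⟨⟨y, t⟩, hp⟩ := hdense (y', 0)
    refine ⟨y, ?_⟩
    have h3 := (h1 (dist (Φ (y, t)).1 y') ((Φ (y, t)).2 - 0) dist_nonneg).trans hp
    obtain ⟨n, hn⟩ := hper t a ha
    have h4 := hlow (y, 0 + n * a) (y, t)
    rw [hequiv] at h4
    have h5 := h2 (dist y y) (0 + n * a - t) a dist_nonneg ha.le
      (by rw [zero_add, abs_sub_comm]; exact hn)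
    have h6 := mul_le_mul_of_nonneg_left h5 hL0.le
    rw [dist_self] at h6
    simp only [dist_self] at h4
    have h7 := dist_triangle (Φ (y, 0)).1 (Φ (y, t)).1 y'
    linarith
end

section
/- Let Γ be a group acting geometrically on proper metric spaces X and X'. Let ζ_1, …, ζ_k ∈ Γ be free generators of a free abelian subgroup Λ of Γ, and assume both Min_X(Λ) = ⋂_{i≤k} Min_X(ζ_i) and Min_{X'}(Λ) = ⋂_{i≤k} Min_{X'}(ζ_i) are nonempty. Let Φ : X → X' be a Γ-equivariant (L,A)-quasi-isometry (Φ(γ•x) = γ•Φ(x) for all γ ∈ Γ, x ∈ X). Then the Hausdorff distance between Φ(Min_X(Λ)) and Min_{X'}(Λ) is finite: there is D ≥ 0 such that each set lies in the D-neighbourhood of the other. (Paper, Section 5.2: Φ(Min_X(Λ)) and Min_{X'}(Λ) have finite Hausdorff distance.) -/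
/-- The centralizer of a finite tuple acts coboundedly on the set of points which are
moved a bounded amount by each member of the tuple. -/
theorem centralizer_cobounded
    {X : Type*} [MetricSpace X] [ProperSpace X] {Γ : Type*} [Group Γ] [MulAction Γ X]
    (isom : ∀ (γ : Γ) (x y : X), dist (γ • x) (γ • y) = dist x y)
    (propdisc : ∀ K : Set X, IsCompact K →
      {γ : Γ | ((fun x => γ • x) '' K ∩ K).Nonempty}.Finite)
    (cocpt : ∃ K : Set X, IsCompact K ∧ ∀ x : X, ∃ γ : Γ, γ • x ∈ K)
    {k : ℕ} (ζ : Fin k → Γ) (R : Fin k → ℝ) (x0 : X) :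
    ∃ D : ℝ, 0 ≤ D ∧ ∀ x : X, (∀ i, dist (ζ i • x) x ≤ R i) →
      ∃ z : Γ, (∀ i, z * ζ i = ζ i * z) ∧ dist x (z • x0) ≤ D := by
  obtain ⟨K, hK, hcov⟩ := cocpt
  obtain ⟨r, hr⟩ := hK.isBounded.subset_closedBall x0
  let F : Fin k → Set Γ := fun i =>
    {γ : Γ | ((fun x => γ • x) '' Metric.closedBall x0 (r + |R i|) ∩
      Metric.closedBall x0 (r + |R i|)).Nonempty}
  have hF : ∀ i, (F i).Finite := fun i => propdisc _ (isCompact_closedBall _ _)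
  have hT : {t : Fin k → Γ | ∀ i, t i ∈ F i}.Finite := Set.Finite.pi' hF
  let c : Γ → (Fin k → Γ) := fun γ i => γ * ζ i * γ⁻¹
  let s : (Fin k → Γ) → Γ := Function.invFun c
  obtain ⟨M, hM⟩ := (hT.image (fun t => dist x0 (s t • x0))).bddAbove
  refine ⟨|r + M|, abs_nonneg _, fun x hx => ?_⟩
  obtain ⟨γ, hγ⟩ := hcov x
  have h1 : dist (γ • x) x0 ≤ r := hr hγ
  have hmem : c γ ∈ {t : Fin k → Γ | ∀ i, t i ∈ F i} := by
    intro i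
    refine ⟨c γ i • γ • x, ⟨γ • x, ?_, rfl⟩, ?_⟩
    · rw [Metric.mem_closedBall]
      linarith [abs_nonneg (R i)]
    · rw [Metric.mem_closedBall]
      have h2 : c γ i • γ • x = γ • ζ i • x := by simp [c, smul_smul]
      have h3 := isom γ (ζ i • x) x
      rw [h2]
      linarith [dist_triangle (γ • ζ i • x) (γ • x) x0, hx i, le_abs_self (R i)]
  have hs : c (s (c γ)) = c γ := Function.invFun_eq ⟨γ, rfl⟩
  have hb : dist x0 (s (c γ) • x0) ≤ M := hM ⟨_, hmem, rfl⟩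
  generalize s (c γ) = σ at hs hb
  refine ⟨γ⁻¹ * σ, fun i => ?_, ?_⟩
  · have h4 : σ * ζ i * σ⁻¹ = γ * ζ i * γ⁻¹ := congrFun hs i
    have h5 : σ * ζ i = γ * ζ i * γ⁻¹ * σ := by rw [← h4]; group
    rw [mul_assoc, h5]; group
  · rw [← isom γ, smul_smul, mul_inv_cancel_left]
    linarith [dist_triangle (γ • x) x0 (σ • x0), le_abs_self (r + M)]


/-- Section 5.2: if `Γ` acts geometrically on proper metric spaces `X` and `X'`,
`ζ 1, …, ζ k` are free generators of a free abelian subgroup `Λ` of `Γ` with both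
minimal displacement sets nonempty, and `Φ : X → X'` is a `Γ`-equivariant
`(L,A)`-quasi-isometry, then `Φ(Min_X(Λ))` and `Min_{X'}(Λ)` have finite
Hausdorff distance. -/
theorem image_of_min_set_finite_hausdorff_distance
    {X X' : Type*} [MetricSpace X] [ProperSpace X] [MetricSpace X'] [ProperSpace X']
    {Γ : Type*} [Group Γ] [MulAction Γ X] [MulAction Γ X']
    -- Γ acts by isometries on X and X'
    (isom : ∀ (γ : Γ) (x y : X), dist (γ • x) (γ • y) = dist x y)
    (isom' : ∀ (γ : Γ) (x y : X'), dist (γ • x) (γ • y) = dist x y)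
    -- Γ acts properly discontinuously on X and X'
    (propdisc : ∀ K : Set X, IsCompact K →
      {γ : Γ | ((fun x => γ • x) '' K ∩ K).Nonempty}.Finite)
    (propdisc' : ∀ K : Set X', IsCompact K →
      {γ : Γ | ((fun x => γ • x) '' K ∩ K).Nonempty}.Finite)
    -- Γ acts cocompactly on X and X'
    (cocpt : ∃ K : Set X, IsCompact K ∧ ∀ x : X, ∃ γ : Γ, γ • x ∈ K)
    (cocpt' : ∃ K : Set X', IsCompact K ∧ ∀ x : X', ∃ γ : Γ, γ • x ∈ K)
    -- ζ 1, …, ζ k are free generators of a free abelian subgroup of Γ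
    {k : ℕ} (ζ : Fin k → Γ)
    (φ : Multiplicative (Fin k → ℤ) →* Γ)
    (hφinj : Function.Injective φ)
    (hφζ : ∀ i : Fin k, φ (Multiplicative.ofAdd (Pi.single i 1)) = ζ i)
    -- the minimal displacement sets, both nonempty
    (MinX : Set X) (MinX' : Set X')
    (hMinX : MinX = ⋂ i : Fin k,
      {x : X | dist (ζ i • x) x = ⨅ y : X, dist (ζ i • y) y})
    (hMinX' : MinX' = ⋂ i : Fin k,
      {x : X' | dist (ζ i • x) x = ⨅ y : X', dist (ζ i • y) y})
    (hne : MinX.Nonempty) (hne' : MinX'.Nonempty)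
    -- Φ is a Γ-equivariant (L,A)-quasi-isometry
    (L A : ℝ) (hL : 1 ≤ L) (hA : 0 ≤ A)
    (Φ : X → X')
    (hqie : ∀ x y : X,
      (1 / L) * dist (Φ x) (Φ y) - A ≤ dist x y ∧
        dist x y ≤ L * dist (Φ x) (Φ y) + A)
    (hdense : ∀ x' : X', ∃ x : X, dist (Φ x) x' ≤ A)
    (hequiv : ∀ (γ : Γ) (x : X), Φ (γ • x) = γ • Φ x) :
    ∃ D : ℝ, 0 ≤ D ∧
      (∀ x ∈ MinX, ∃ y ∈ MinX', dist (Φ x) y ≤ D) ∧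
      (∀ y ∈ MinX', ∃ x ∈ MinX, dist (Φ x) y ≤ D) := by

  obtain ⟨x0, hx0⟩ := hne
  obtain ⟨y0, hy0⟩ := hne'
  subst hMinX hMinX'
  simp only [Set.mem_iInter, Set.mem_setOf_eq] at *
  obtain ⟨D₁, hD₁, H₁⟩ := centralizer_cobounded isom' propdisc' cocpt' ζ
    (fun i => L * ((⨅ y : X, dist (ζ i • y) y) + A)) y0
  obtain ⟨D₂, hD₂, H₂⟩ := centralizer_cobounded isom' propdisc' cocpt' ζ
    (fun i => ⨅ y : X', dist (ζ i • y) y) (Φ x0)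
  refine ⟨max D₁ D₂, le_max_of_le_left hD₁, fun x hx => ?_, fun y hy => ?_⟩
  · obtain ⟨z, hz, hd⟩ := H₁ (Φ x) (fun i => by
      have h := (hqie (ζ i • x) x).1
      rw [hx i, hequiv] at h
      have hL0 : 0 < L := by linarith
      rw [← div_le_iff₀' hL0]
      have : dist (ζ i • Φ x) (Φ x) / L = 1 / L * dist (ζ i • Φ x) (Φ x) := by ring
      linarith)
    refine ⟨z • y0, fun i => ?_, hd.trans (le_max_left _ _)⟩
    rw [smul_smul, ← hz i, mul_smul, isom', hy0 i]
  · obtain ⟨z, hz, hd⟩ := H₂ y (fun i => (hy i).le)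
    refine ⟨z • x0, fun i => ?_, ?_⟩
    · rw [smul_smul, ← hz i, mul_smul, isom, hx0 i]
    · rw [hequiv, dist_comm]
      exact hd.trans (le_max_right _ _)
end
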